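/- The order of the symplectic group Sp(2m, F_2) is 2^{m²} · ∏_{j=1}^{m} (4^j − 1). -/

import Mathlib

open Matrix

/-- The symplectic form matrix `Ω = [[0, I_m],[I_m, 0]]` over `F_2`. -/
def Om (m : ℕ) : Matrix (Fin m ⊕ Fin m) (Fin m ⊕ Fin m) (ZMod 2) :=
  Matrix.fromBlocks 0 1 1 0

/-- symplectic families of pairs -/
def SympFam {V : Type} [AddCommGroup V] [Module (ZMod 2) V]
    (B : V →ₗ[ZMod 2] V →ₗ[ZMod 2] ZMod 2) {m : ℕ} (p : Fin m → V × V) : Prop :=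
  ∀ i j, B (p i).1 (p j).1 = 0 ∧ B (p i).2 (p j).2 = 0 ∧
    B (p i).1 (p j).2 = if i = j then 1 else 0

lemma zmod2_cases (a : ZMod 2) : a = 0 ∨ a = 1 := by
  revert a; decide

section
variable {V : Type} [AddCommGroup V] [Module (ZMod 2) V]
  (B : V →ₗ[ZMod 2] V →ₗ[ZMod 2] ZMod 2)

lemma symm_of_alt (hB : ∀ x, B x x = 0) (x y : V) : B x y = B y x := by
  have h := hB (x + y)
  simp only [map_add, LinearMap.add_apply, hB, zero_add, add_zero] at h
  have := eq_neg_of_add_eq_zero_left h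
  rw [ZMod.neg_eq_self_mod_two] at this
  exact this.symm

/-- orthogonal complement of a pair -/
def Wc (q : V × V) : Submodule (ZMod 2) V := LinearMap.ker ((B q.1).prod (B q.2))

lemma mem_Wc (q : V × V) (w : V) : w ∈ Wc B q ↔ B q.1 w = 0 ∧ B q.2 w = 0 := by
  simp [Wc]

/-- restricted form -/
def Bres (W : Submodule (ZMod 2) V) : W →ₗ[ZMod 2] W →ₗ[ZMod 2] ZMod 2 :=
  B.compl₁₂ W.subtype W.subtype

lemma Bres_apply (W : Submodule (ZMod 2) V) (x y : W) : Bres B W x y = B x y := rfl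

lemma card_ker_mul {U : Type} [AddCommGroup U] [Module (ZMod 2) U] (f : V →ₗ[ZMod 2] U)
    (hf : Function.Surjective f) :
    Nat.card V = Nat.card U * Nat.card (LinearMap.ker f) := by
  rw [Submodule.card_eq_card_quotient_mul_card (LinearMap.ker f),
    Nat.card_congr (f.quotKerEquivOfSurjective hf).toEquiv]
  try rw [mul_comm]

lemma card_Wc (hB : ∀ x, B x x = 0) (q : V × V) (hq : B q.1 q.2 = 1) :
    Nat.card V = 4 * Nat.card (Wc B q) := by
  have h := card_ker_mul ((B q.1).prod (B q.2)) (by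
    rintro ⟨a, b⟩
    refine ⟨a • q.2 + b • q.1, ?_⟩
    have := symm_of_alt B hB q.2 q.1
    simp [hB, hq, this])
  rw [h]
  simp [Wc]

lemma card_fiber [Finite V] (f : V →ₗ[ZMod 2] ZMod 2) (y : V) (hy : f y = 1) :
    2 * Nat.card {v // f v = 1} = Nat.card V := by
  have h := card_ker_mul f (fun a => ⟨a • y, by simp [hy]⟩)
  have e : {v // f v = 1} ≃ LinearMap.ker f :=
    { toFun := fun v => ⟨v.1 - y, by simp [v.2, hy]⟩
      invFun := fun v => ⟨v.1 + y, by have := v.2; simp at this; simp [this, hy]⟩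
      left_inv := fun v => by simp
      right_inv := fun v => by simp }
  rw [h, Nat.card_congr e]
  simp

lemma card_pairs [Finite V] (hn : ∀ x, (∀ y, B x y = 0) → x = 0) :
    2 * Nat.card {q : V × V // B q.1 q.2 = 1} = (Nat.card V - 1) * Nat.card V := by
  classical
  have := Fintype.ofFinite V
  have e : {q : V × V // B q.1 q.2 = 1} ≃ Σ x : {x : V // x ≠ 0}, {y // B x.1 y = 1} :=
    { toFun := fun q => ⟨⟨q.1.1, by
          intro h; have := q.2; simp [h] at this⟩, ⟨q.1.2, q.2⟩⟩
      invFun := fun s => ⟨(s.1.1, s.2.1), s.2.2⟩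
      left_inv := fun q => rfl
      right_inv := fun s => rfl }
  rw [Nat.card_congr e, Nat.card_sigma, Finset.mul_sum]
  rw [Finset.sum_congr rfl (g := fun _ => Nat.card V)]
  · rw [Finset.sum_const, smul_eq_mul, Finset.card_univ]
    congr 1
    rw [Nat.card_eq_fintype_card]
    simp
  · intro x _
    obtain ⟨y, hy⟩ : ∃ y, B x.1 y ≠ 0 := by
      by_contra! h
      exact x.2 (hn _ h)
    exact card_fiber _ y ((zmod2_cases _).resolve_left hy)

lemma Bres_nondeg (hB : ∀ x, B x x = 0) (hn : ∀ x, (∀ y, B x y = 0) → x = 0)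
    (q : V × V) (hq : B q.1 q.2 = 1) (x : Wc B q) (hx : ∀ y, Bres B (Wc B q) x y = 0) :
    x = 0 := by
  apply Subtype.ext
  apply hn
  intro v
  have hs := symm_of_alt B hB
  have h2 : B q.2 q.1 = 1 := by rw [hs, hq]
  have hm := (mem_Wc B q x.1).1 x.2
  have := hx ⟨v - B q.1 v • q.2 - B q.2 v • q.1, by
    rw [mem_Wc]; simp [hB, hq, h2]⟩
  rw [Bres_apply] at this
  simpa [hs x.1 q.1, hs x.1 q.2, hm.1, hm.2] using this

/-- splitting off the first pair -/
def famEquiv (hB : ∀ x, B x x = 0) (m : ℕ) :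
    {p : Fin (m + 1) → V × V // SympFam B p} ≃
      Σ q : {q : V × V // B q.1 q.2 = 1},
        {p : Fin m → Wc B q.1 × Wc B q.1 // SympFam (Bres B (Wc B q.1)) p} where
  toFun p := ⟨⟨p.1 0, by simpa using (p.2 0 0).2.2⟩,
    ⟨fun i => (⟨(p.1 i.succ).1, by
        rw [mem_Wc]
        refine ⟨(p.2 0 i.succ).1, ?_⟩
        rw [symm_of_alt B hB, (p.2 i.succ 0).2.2]; simp⟩,
      ⟨(p.1 i.succ).2, by
        rw [mem_Wc]
        refine ⟨?_, (p.2 0 i.succ).2.1⟩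
        rw [(p.2 0 i.succ).2.2]; simp [(Fin.succ_ne_zero i).symm]⟩), by
      intro i j
      have := p.2 i.succ j.succ
      simpa [Bres_apply] using this⟩⟩
  invFun s := ⟨Fin.cons s.1.1 (fun i => ((s.2.1 i).1.1, (s.2.1 i).2.1)), by
    obtain ⟨⟨q, hq⟩, ⟨p, hp⟩⟩ := s
    have h1 := fun i => (mem_Wc B q _).1 (p i).1.2
    have h2 := fun i => (mem_Wc B q _).1 (p i).2.2
    have hs := symm_of_alt B hB
    intro i j
    refine Fin.cases ?_ (fun i => ?_) i <;> refine Fin.cases ?_ (fun j => ?_) j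
    · simp [hB, hq]
    · simp [h1, h2, (Fin.succ_ne_zero j).symm]
    · simp [hs _ q.1, hs _ q.2, h1, h2]
    · have := hp i j
      simpa [Bres_apply] using this⟩
  left_inv p := by
    apply Subtype.ext
    funext i
    refine Fin.cases ?_ (fun i => ?_) i <;> simp
  right_inv s := by
    obtain ⟨⟨q, hq⟩, ⟨p, hp⟩⟩ := s
    rfl
end

theorem card_fam (m : ℕ) : ∀ (V : Type) [AddCommGroup V] [Module (ZMod 2) V] [Finite V]
    (B : V →ₗ[ZMod 2] V →ₗ[ZMod 2] ZMod 2), (∀ x, B x x = 0) →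
    (∀ x, (∀ y, B x y = 0) → x = 0) → Nat.card V = 4 ^ m →
    Nat.card {p : Fin m → V × V // SympFam B p} =
      2 ^ (m ^ 2) * ∏ j ∈ Finset.Icc 1 m, (4 ^ j - 1) := by
  induction m with
  | zero =>
    intro V _ _ _ B _ _ _
    have : Unique {p : Fin 0 → V × V // SympFam B p} :=
      { default := ⟨Fin.elim0, fun i => i.elim0⟩
        uniq := fun a => Subtype.ext (Subsingleton.elim _ _) }
    simp
  | succ m ih =>
    intro V _ _ _ B hB hn hc
    have := Fintype.ofFinite {q : V × V // B q.1 q.2 = 1}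
    rw [Nat.card_congr (famEquiv B hB m), Nat.card_sigma]
    have key : ∀ q : {q : V × V // B q.1 q.2 = 1},
        Nat.card {p : Fin m → Wc B q.1 × Wc B q.1 // SympFam (Bres B (Wc B q.1)) p} =
          2 ^ (m ^ 2) * ∏ j ∈ Finset.Icc 1 m, (4 ^ j - 1) := by
      intro q
      apply ih
      · intro x
        rw [Bres_apply]
        exact hB x.1
      · exact Bres_nondeg B hB hn q.1 q.2
      · have := card_Wc B hB q.1 q.2
        rw [hc, pow_succ] at this
        omega
    rw [Finset.sum_congr rfl (fun q _ => key q)]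
    have hp := card_pairs B hn
    rw [Finset.sum_const, smul_eq_mul, Finset.card_univ, ← Nat.card_eq_fintype_card,
      Finset.prod_Icc_succ_top (by omega)]
    rw [hc] at hp
    have h4 : (4 : ℕ) ^ (m + 1) = 2 * 2 ^ (2 * m + 1) := by
      rw [show (4 : ℕ) = 2 ^ 2 by norm_num, ← pow_mul]; ring
    have hp' : Nat.card {q : V × V // B q.1 q.2 = 1} = (4 ^ (m + 1) - 1) * 2 ^ (2 * m + 1) := by
      apply Nat.eq_of_mul_eq_mul_left (show 0 < 2 by norm_num)
      rw [hp]
      conv_lhs => rw [mul_comm, h4]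
      rw [h4]; ring
    rw [hp', show (m + 1) ^ 2 = m ^ 2 + (2 * m + 1) by ring, pow_add 2 (m ^ 2)]
    ring

/-- the matrix equation, entrywise -/
lemma entry (m : ℕ) (F : Matrix (Fin m ⊕ Fin m) (Fin m ⊕ Fin m) (ZMod 2))
    (i j : Fin m ⊕ Fin m) :
    (F * Om m * Fᵀ) i j = Matrix.toLinearMap₂' (ZMod 2) (Om m) (F i) (F j) := by
  rw [Matrix.toLinearMap₂'_apply', Matrix.mul_assoc, Matrix.mul_apply_eq_vecMul]
  simp [Matrix.mul_apply, dotProduct, Matrix.mulVec, Matrix.vecMul]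

lemma Om_form (m : ℕ) (x y : Fin m ⊕ Fin m → ZMod 2) :
    Matrix.toLinearMap₂' (ZMod 2) (Om m) x y =
      ∑ i, (x (.inl i) * y (.inr i) + x (.inr i) * y (.inl i)) := by
  rw [Matrix.toLinearMap₂'_apply']
  simp [Om, dotProduct, Matrix.mulVec, Fintype.sum_sum_type, Matrix.one_apply,
    Finset.sum_add_distrib]

/-- rows -/
def rowsEquiv (m : ℕ) : Matrix (Fin m ⊕ Fin m) (Fin m ⊕ Fin m) (ZMod 2) ≃
    (Fin m → (Fin m ⊕ Fin m → ZMod 2) × (Fin m ⊕ Fin m → ZMod 2)) where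
  toFun F i := (F (.inl i), F (.inr i))
  invFun p := Sum.elim (fun i => (p i).1) (fun i => (p i).2)
  left_inv F := by funext i; cases i <;> rfl
  right_inv p := rfl

theorem stmt12 (m : ℕ) :
    {F : Matrix (Fin m ⊕ Fin m) (Fin m ⊕ Fin m) (ZMod 2) |
        F * Om m * Fᵀ = Om m}.ncard =
      2 ^ (m ^ 2) * ∏ j ∈ Finset.Icc 1 m, (4 ^ j - 1) := by
  have hB : ∀ x : Fin m ⊕ Fin m → ZMod 2, Matrix.toLinearMap₂' (ZMod 2) (Om m) x x = 0 := by
    intro x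
    rw [Om_form]
    refine Finset.sum_eq_zero fun i _ => ?_
    rw [mul_comm]
    exact CharTwo.add_self_eq_zero _
  have hs := symm_of_alt _ hB
  rw [← card_fam m (Fin m ⊕ Fin m → ZMod 2) (Matrix.toLinearMap₂' (ZMod 2) (Om m)) hB ?_ ?_]
  · rw [← Nat.card_coe_set_eq]
    refine Nat.card_congr ((rowsEquiv m).subtypeEquiv ?_)
    intro F
    simp only [Set.mem_setOf_eq]
    rw [← Matrix.ext_iff]
    simp only [entry]
    constructor
    · intro h i j
      refine ⟨?_, ?_, ?_⟩
      · exact (h (.inl i) (.inl j)).trans (by simp [Om])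
      · exact (h (.inr i) (.inr j)).trans (by simp [Om])
      · exact (h (.inl i) (.inr j)).trans (by simp [Om, Matrix.one_apply])
    · intro h i j
      rcases i with i | i <;> rcases j with j | j
      · exact (h i j).1.trans (by simp [Om])
      · exact (h i j).2.2.trans (by simp [Om, Matrix.one_apply])
      · rw [hs]
        exact (h j i).2.2.trans (by simp [Om, Matrix.one_apply, eq_comm])
      · exact (h i j).2.1.trans (by simp [Om])
  · intro x hx
    funext i
    rcases i with i | i
    · have := hx (Pi.single (.inr i) 1)
      rw [Om_form] at this
      simpa [Pi.single_apply] using this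
    · have := hx (Pi.single (.inl i) 1)
      rw [Om_form] at this
      simpa [Pi.single_apply] using this
  · simp [← two_mul, pow_mul]
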